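/- Suppose the extended relativistic Toda lattice equations of finite order N hold: for all n = 1, …, N and all t, α_n'(t) = p·α_n(t)·(α_{n−1}(t) + γ_{n−1}(t) − α_n(t) − γ_n(t)) + q·α_n(t)·( 1/(γ_{n−1}(t) − α_n(t)) − 1/(γ_n(t) − α_{n+1}(t)) ) and γ_n'(t) = p·( α_n(t)·γ_n(t) − α_{n+1}(t)·γ_{n+1}(t) ) + q·( α_{n+1}(t)/(γ_n(t) − α_{n+1}(t)) − α_n(t)/(γ_{n−1}(t) − α_n(t)) ). Then the N×N Lax representation holds: for all t, dH_N/dt (t) = H_N(t)·F_N(t) − F_N(t)·H_N(t), where F_N = p·X_N + q·Y_N. -/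

import Mathlib

/-!
Let `S` be the lower shift, `U` the upper triangular matrix of ones, and write `Δa` for
`diag (a₁, …, a_N)`. Then `H = U Δγ + Δα S`, `X = Δα (1 - S)` and `Y = Δδ (1 - Sᵀ)`, where
`δₙ = 1 / (γₙ - αₙ₊₁)`. Both commutators reduce to Hessenberg form by `U (1 - Sᵀ) = (1 - Sᵀ) U = 1`
and the intertwining `Δa S = S Δa₊`, `a₊ = a ∘ succ`, together with the two corner relations
`Δα S Sᵀ = Δα` and `Sᵀ Δα S = Δα₊`, which are the boundary conditions `α₁ = 0` and `α_{N+1} = 0`.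
-/

section Matrices

open Matrix

/-- The lower shift matrix `S`, with ones on the first subdiagonal. -/
def lowerShift (R : Type*) [CommRing R] (N : ℕ) : Matrix (Fin N) (Fin N) R :=
  of fun i j => if (i : ℕ) = j + 1 then 1 else 0

/-- The upper triangular matrix `U` all of whose entries on and above the diagonal are one. -/
def upperOnes (R : Type*) [CommRing R] (N : ℕ) : Matrix (Fin N) (Fin N) R :=
  of fun i j => if i ≤ j then 1 else 0

variable {R : Type*} [CommRing R] (N : ℕ)

/-- The matrix `diag (a₁, …, a_N)`: sequences keep the 1-based indices of the Toda equations, so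
`Fin N` indices are shifted by one. -/
def seqDiagonal (a : ℕ → R) : Matrix (Fin N) (Fin N) R :=
  diagonal fun i => a (i + 1)

/-- The Hessenberg matrix with columns `γⱼ` on and above the diagonal and subdiagonal entries
`αᵢ`, as a combination of `U` and `S`. -/
def hessenberg (α γ : ℕ → R) : Matrix (Fin N) (Fin N) R :=
  upperOnes R N * seqDiagonal N γ + seqDiagonal N α * lowerShift R N

/-- The lower bidiagonal Lax matrix `X`, which generates the `p`-part of the Toda flow. -/
def lowerLax (α : ℕ → R) : Matrix (Fin N) (Fin N) R :=
  seqDiagonal N α * (1 - lowerShift R N)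

/-- The upper bidiagonal Lax matrix `Y`, which generates the `q`-part of the Toda flow; the
sequence `δ` stands for the reciprocals of `γₙ - αₙ₊₁`. -/
def upperLax (δ : ℕ → R) : Matrix (Fin N) (Fin N) R :=
  seqDiagonal N δ * (1 - (lowerShift R N)ᵀ)

theorem hessenberg_apply (α γ : ℕ → R) (i j : Fin N) :
    hessenberg N α γ i j =
      if (i : ℕ) ≤ j then γ (j + 1) else if (i : ℕ) = j + 1 then α (i + 1) else 0 := by
  simp only [hessenberg, seqDiagonal, upperOnes, lowerShift, Matrix.add_apply, mul_diagonal,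
    diagonal_mul, of_apply, Fin.le_def]
  split_ifs <;> first | omega | simp

theorem lowerLax_apply (α : ℕ → R) (i j : Fin N) :
    lowerLax N α i j =
      if i = j then α (i + 1) else if (i : ℕ) = j + 1 then -α (i + 1) else 0 := by
  simp only [lowerLax, seqDiagonal, lowerShift, diagonal_mul, Matrix.sub_apply, one_apply,
    of_apply, Fin.ext_iff]
  split_ifs <;> first | omega | simp

theorem upperLax_apply (δ : ℕ → R) (i j : Fin N) :
    upperLax N δ i j =
      if i = j then δ (i + 1) else if (j : ℕ) = i + 1 then -δ (i + 1) else 0 := by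
  simp only [upperLax, seqDiagonal, lowerShift, diagonal_mul, Matrix.sub_apply, one_apply,
    transpose_apply, of_apply, Fin.ext_iff]
  split_ifs <;> first | omega | simp

theorem hessenberg_add (α α' γ γ' : ℕ → R) :
    hessenberg N (α + α') (γ + γ') = hessenberg N α γ + hessenberg N α' γ' := by
  ext i j
  simp only [hessenberg_apply, Matrix.add_apply, Pi.add_apply]
  split_ifs <;> simp

theorem hessenberg_smul (c : R) (α γ : ℕ → R) :
    hessenberg N (c • α) (c • γ) = c • hessenberg N α γ := by
  ext i j
  simp only [hessenberg_apply, Matrix.smul_apply, Pi.smul_apply]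
  split_ifs <;> simp

theorem seqDiagonal_mul (a b : ℕ → R) :
    seqDiagonal N (a * b) = seqDiagonal N a * seqDiagonal N b := by
  simp [seqDiagonal]

theorem seqDiagonal_add (a b : ℕ → R) :
    seqDiagonal N (a + b) = seqDiagonal N a + seqDiagonal N b := by
  simp [seqDiagonal]

theorem seqDiagonal_sub (a b : ℕ → R) :
    seqDiagonal N (a - b) = seqDiagonal N a - seqDiagonal N b := by
  simp [seqDiagonal]

theorem seqDiagonal_mul_comm (a b : ℕ → R) :
    seqDiagonal N a * seqDiagonal N b = seqDiagonal N b * seqDiagonal N a := by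
  rw [← seqDiagonal_mul, mul_comm, seqDiagonal_mul]

theorem seqDiagonal_mul_eq_one {a b : ℕ → R} (h : ∀ n, 1 ≤ n → n ≤ N → a n * b n = 1) :
    seqDiagonal N a * seqDiagonal N b = 1 := by
  rw [seqDiagonal, seqDiagonal, diagonal_mul_diagonal, ← diagonal_one]
  exact congrArg diagonal (funext fun i => h _ (by omega) i.isLt)

theorem transpose_lowerShift_mul_apply (M : Matrix (Fin N) (Fin N) R) (i j : Fin N) :
    ((lowerShift R N)ᵀ * M) i j = if h : (i : ℕ) + 1 < N then M ⟨i + 1, h⟩ j else 0 := by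
  simp only [Matrix.mul_apply, transpose_apply, lowerShift, of_apply, ite_mul, one_mul, zero_mul]
  split_ifs with h
  · have hk (k : Fin N) : (k : ℕ) = i + 1 ↔ k = ⟨i + 1, h⟩ :=
      (Fin.ext_iff (b := ⟨i + 1, h⟩)).symm
    simp only [hk, Finset.sum_ite_eq', Finset.mem_univ, if_true]
  · exact Finset.sum_eq_zero fun k _ => if_neg (by omega)

theorem one_sub_transpose_lowerShift_mul_upperOnes :
    (1 - (lowerShift R N)ᵀ) * upperOnes R N = 1 := by
  ext i j
  rw [sub_mul, one_mul, Matrix.sub_apply, transpose_lowerShift_mul_apply]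
  simp only [upperOnes, of_apply, one_apply, Fin.le_def, Fin.ext_iff]
  split_ifs <;> first | omega | simp

theorem upperOnes_mul_one_sub_transpose_lowerShift :
    upperOnes R N * (1 - (lowerShift R N)ᵀ) = 1 :=
  mul_eq_one_comm.mp (one_sub_transpose_lowerShift_mul_upperOnes N)

theorem seqDiagonal_mul_lowerShift (a : ℕ → R) :
    seqDiagonal N a * lowerShift R N = lowerShift R N * seqDiagonal N (a ∘ Nat.succ) := by
  ext i j
  simp only [seqDiagonal, lowerShift, diagonal_mul, mul_diagonal, of_apply]
  split_ifs with h <;> simp [h]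

theorem lowerShift_mul_seqDiagonal (a : ℕ → R) :
    lowerShift R N * seqDiagonal N a = seqDiagonal N (a ∘ Nat.pred) * lowerShift R N :=
  (seqDiagonal_mul_lowerShift N (a ∘ Nat.pred)).symm

theorem transpose_lowerShift_mul_seqDiagonal (a : ℕ → R) :
    (lowerShift R N)ᵀ * seqDiagonal N a =
      seqDiagonal N (a ∘ Nat.succ) * (lowerShift R N)ᵀ := by
  simpa [seqDiagonal] using congrArg transpose (seqDiagonal_mul_lowerShift N a)

theorem seqDiagonal_mul_lowerShift_mul_transpose {a : ℕ → R} (h₁ : a 1 = 0) :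
    seqDiagonal N a * lowerShift R N * (lowerShift R N)ᵀ = seqDiagonal N a := by
  ext ⟨i, hi⟩ j
  rw [seqDiagonal, mul_assoc, diagonal_mul, diagonal_apply]
  cases i with
  | zero => simp [h₁]
  | succ k =>
    have hS : (lowerShift R N * (lowerShift R N)ᵀ) ⟨k + 1, hi⟩ j =
        if (⟨k + 1, hi⟩ : Fin N) = j then 1 else 0 := by
      rw [Matrix.mul_apply, Finset.sum_eq_single (⟨k, by omega⟩ : Fin N)]
      · simp [lowerShift, Fin.ext_iff, eq_comm]
      · intro l _ hl
        have : k ≠ l := fun h => hl (Fin.ext h.symm)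
        simp [lowerShift, this]
      · simp
    simp [hS]

theorem transpose_lowerShift_mul_seqDiagonal_mul {a : ℕ → R} (hN : a (N + 1) = 0) :
    (lowerShift R N)ᵀ * seqDiagonal N a * lowerShift R N = seqDiagonal N (a ∘ Nat.succ) := by
  ext i j
  rw [mul_assoc, transpose_lowerShift_mul_apply]
  simp only [seqDiagonal, lowerShift, diagonal_mul, diagonal_apply, of_apply, Fin.ext_iff]
  by_cases h : (i : ℕ) + 1 < N
  · simp [h]
  · simp [show (i : ℕ) + 1 = N by omega, hN]

theorem upperOnes_mul_seqDiagonal_mul_lowerShift {a : ℕ → R} (hN : a (N + 1) = 0) :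
    upperOnes R N * seqDiagonal N a * lowerShift R N =
      upperOnes R N * seqDiagonal N (a ∘ Nat.succ) + seqDiagonal N a * lowerShift R N := by
  have hU := upperOnes_mul_one_sub_transpose_lowerShift (R := R) N
  linear_combination (norm := noncomm_ring)
    hU * (seqDiagonal N a * lowerShift R N) +
      upperOnes R N * transpose_lowerShift_mul_seqDiagonal_mul N hN

theorem lowerLax_mul_upperOnes {α : ℕ → R} (h₁ : α 1 = 0) :
    lowerLax N α * upperOnes R N = -(seqDiagonal N α * lowerShift R N) := by
  have hU := one_sub_transpose_lowerShift_mul_upperOnes (R := R) N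
  rw [lowerLax]
  linear_combination (norm := noncomm_ring)
    -(seqDiagonal N α * lowerShift R N * hU) -
      seqDiagonal_mul_lowerShift_mul_transpose N h₁ * upperOnes R N

theorem upperLax_mul_hessenberg {α γ δ : ℕ → R} (hN : α (N + 1) = 0)
    (hδ : ∀ n, 1 ≤ n → n ≤ N → (γ n - α (n + 1)) * δ n = 1) :
    upperLax N δ * hessenberg N α γ = 1 + seqDiagonal N (α * δ) * lowerShift R N := by
  have hU := one_sub_transpose_lowerShift_mul_upperOnes (R := R) N
  have hD : seqDiagonal N δ * (seqDiagonal N γ - seqDiagonal N (α ∘ Nat.succ)) = 1 := by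
    rw [← seqDiagonal_sub, seqDiagonal_mul_comm]
    exact seqDiagonal_mul_eq_one N hδ
  rw [upperLax, hessenberg, mul_comm α, seqDiagonal_mul]
  linear_combination (norm := noncomm_ring)
    seqDiagonal N δ * hU * seqDiagonal N γ -
      seqDiagonal N δ * transpose_lowerShift_mul_seqDiagonal_mul N hN + hD

theorem hessenberg_mul_upperLax {α γ δ : ℕ → R} (h₁ : α 1 = 0)
    (hδ : ∀ n, 1 ≤ n → n ≤ N → (γ n - α (n + 1)) * δ n = 1) :
    hessenberg N α γ * upperLax N δ =
      1 + hessenberg N (α * δ ∘ Nat.pred) (α ∘ Nat.succ * δ - α * δ ∘ Nat.pred) := by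
  set β : ℕ → R := α * δ ∘ Nat.pred with hβ
  have hU := upperOnes_mul_one_sub_transpose_lowerShift (R := R) N
  have hD : (seqDiagonal N γ - seqDiagonal N (α ∘ Nat.succ)) * seqDiagonal N δ = 1 := by
    rw [← seqDiagonal_sub]
    exact seqDiagonal_mul_eq_one N hδ
  have hT : (lowerShift R N)ᵀ * seqDiagonal N β =
      seqDiagonal N (α ∘ Nat.succ) * seqDiagonal N δ * (lowerShift R N)ᵀ := by
    rw [transpose_lowerShift_mul_seqDiagonal, ← seqDiagonal_mul]
    rfl
  have hS : seqDiagonal N α * lowerShift R N * seqDiagonal N δ =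
      seqDiagonal N β * lowerShift R N := by
    rw [mul_assoc, lowerShift_mul_seqDiagonal, hβ, seqDiagonal_mul, mul_assoc]
  have hST : seqDiagonal N β * lowerShift R N * (lowerShift R N)ᵀ = seqDiagonal N β :=
    seqDiagonal_mul_lowerShift_mul_transpose N (by simp [β, h₁])
  rw [upperLax, hessenberg, hessenberg, seqDiagonal_sub, seqDiagonal_mul]
  linear_combination (norm := noncomm_ring)
    upperOnes R N * hD * (1 - (lowerShift R N)ᵀ) + hU + hU * seqDiagonal N β +
      hS * (1 - (lowerShift R N)ᵀ) - hST + upperOnes R N * hT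

theorem lie_hessenberg_lowerLax {α γ : ℕ → R} (h₁ : α 1 = 0) (hN : α (N + 1) = 0) :
    ⁅hessenberg N α γ, lowerLax N α⁆ =
      hessenberg N (α * (α ∘ Nat.pred + γ ∘ Nat.pred - α - γ))
        (α * γ - (α * γ) ∘ Nat.succ) := by
  have hS (a : ℕ → R) := lowerShift_mul_seqDiagonal N a
  have hU := upperOnes_mul_seqDiagonal_mul_lowerShift N (a := α * γ) (by simp [hN])
  have hX := lowerLax_mul_upperOnes N h₁
  have hγα := seqDiagonal_mul_comm N γ α
  rw [lowerLax] at hX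
  rw [seqDiagonal_mul N α γ] at hU
  rw [Ring.lie_def, lowerLax, hessenberg, hessenberg]
  simp only [seqDiagonal_mul, seqDiagonal_sub, seqDiagonal_add]
  linear_combination (norm := noncomm_ring)
    upperOnes R N * hγα * (1 - lowerShift R N) - hU + seqDiagonal N α * hS α +
      seqDiagonal N α * hS γ - hX * seqDiagonal N γ

theorem lie_hessenberg_upperLax {α γ δ : ℕ → R} (h₁ : α 1 = 0) (hN : α (N + 1) = 0)
    (hδ : ∀ n, 1 ≤ n → n ≤ N → (γ n - α (n + 1)) * δ n = 1) :
    ⁅hessenberg N α γ, upperLax N δ⁆ =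
      hessenberg N (α * (δ ∘ Nat.pred - δ)) (α ∘ Nat.succ * δ - α * δ ∘ Nat.pred) := by
  rw [Ring.lie_def, hessenberg_mul_upperLax N h₁ hδ, upperLax_mul_hessenberg N hN hδ, hessenberg,
    hessenberg, mul_sub α, seqDiagonal_sub N (α * _)]
  noncomm_ring

/-- The right-hand side of the extended relativistic Toda equation for `αₙ`, with `δₙ` in place of
`1 / (γₙ - αₙ₊₁)`. -/
def todaAlpha (p q : R) (α γ δ : ℕ → R) : ℕ → R :=
  p • (α * (α ∘ Nat.pred + γ ∘ Nat.pred - α - γ)) + q • (α * (δ ∘ Nat.pred - δ))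

/-- The right-hand side of the extended relativistic Toda equation for `γₙ`, with `δₙ` in place of
`1 / (γₙ - αₙ₊₁)`. -/
def todaGamma (p q : R) (α γ δ : ℕ → R) : ℕ → R :=
  p • (α * γ - (α * γ) ∘ Nat.succ) + q • (α ∘ Nat.succ * δ - α * δ ∘ Nat.pred)

theorem lie_hessenberg_lax (p q : R) {α γ δ : ℕ → R} (h₁ : α 1 = 0) (hN : α (N + 1) = 0)
    (hδ : ∀ n, 1 ≤ n → n ≤ N → (γ n - α (n + 1)) * δ n = 1) :
    ⁅hessenberg N α γ, p • lowerLax N α + q • upperLax N δ⁆ =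
      hessenberg N (todaAlpha p q α γ δ) (todaGamma p q α γ δ) := by
  rw [todaAlpha, todaGamma, hessenberg_add, hessenberg_smul, hessenberg_smul,
    ← lie_hessenberg_lowerLax N h₁ hN, ← lie_hessenberg_upperLax N h₁ hN hδ]
  simp only [Ring.lie_def, mul_add, add_mul, mul_smul_comm, smul_mul_assoc, smul_sub]
  abel

end Matrices

section Field

variable {K : Type*} [Field K]

theorem todaAlpha_one_div (p q : K) (α γ : ℕ → K) {n : ℕ} (hn : 1 ≤ n) :
    todaAlpha p q α γ (fun n => 1 / (γ n - α (n + 1))) n =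
      p * α n * (α (n - 1) + γ (n - 1) - α n - γ n) +
        q * α n * (1 / (γ (n - 1) - α n) - 1 / (γ n - α (n + 1))) := by
  simp only [todaAlpha, Pi.add_apply, Pi.sub_apply, Pi.mul_apply, Pi.smul_apply, smul_eq_mul,
    Function.comp_apply, Nat.pred_eq_sub_one, Nat.sub_add_cancel hn]
  ring

theorem todaGamma_one_div (p q : K) (α γ : ℕ → K) {n : ℕ} (hn : 1 ≤ n) :
    todaGamma p q α γ (fun n => 1 / (γ n - α (n + 1))) n =
      p * (α n * γ n - α (n + 1) * γ (n + 1)) +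
        q * (α (n + 1) / (γ n - α (n + 1)) - α n / (γ (n - 1) - α n)) := by
  simp only [todaGamma, Pi.add_apply, Pi.sub_apply, Pi.mul_apply, Pi.smul_apply, smul_eq_mul,
    Function.comp_apply, Nat.pred_eq_sub_one, Nat.succ_eq_add_one, Nat.sub_add_cancel hn]
  ring

end Field

section Flow

variable {𝕜 R : Type*} [NontriviallyNormedField 𝕜] [NormedCommRing R] [NormedAlgebra 𝕜 R] {N : ℕ}

theorem hasDerivAt_hessenberg_apply {α γ : ℕ → 𝕜 → R} {α' γ' : ℕ → R} {t : 𝕜}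
    (hα : ∀ n, 1 ≤ n → n ≤ N → HasDerivAt (α n) (α' n) t)
    (hγ : ∀ n, 1 ≤ n → n ≤ N → HasDerivAt (γ n) (γ' n) t) (i j : Fin N) :
    HasDerivAt (fun s => hessenberg N (α · s) (γ · s) i j) (hessenberg N α' γ' i j) t := by
  simp only [hessenberg_apply]
  split_ifs
  · exact hγ _ (by omega) j.isLt
  · exact hα _ (by omega) i.isLt
  · exact hasDerivAt_const t 0

theorem stmt_4_general (p q : R) {α γ : ℕ → 𝕜 → R} {δ : ℕ → R} {t : 𝕜}
    (hα₁ : α 1 t = 0) (hαN : α (N + 1) t = 0)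
    (hδ : ∀ n, 1 ≤ n → n ≤ N → (γ n t - α (n + 1) t) * δ n = 1)
    (hα : ∀ n, 1 ≤ n → n ≤ N → HasDerivAt (α n) (todaAlpha p q (α · t) (γ · t) δ n) t)
    (hγ : ∀ n, 1 ≤ n → n ≤ N → HasDerivAt (γ n) (todaGamma p q (α · t) (γ · t) δ n) t)
    (i j : Fin N) :
    HasDerivAt (fun s => hessenberg N (α · s) (γ · s) i j)
      (⁅hessenberg N (α · t) (γ · t), p • lowerLax N (α · t) + q • upperLax N δ⁆ i j) t := by
  rw [lie_hessenberg_lax N p q hα₁ hαN hδ]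
  exact hasDerivAt_hessenberg_apply hα hγ i j

end Flow

theorem stmt_4 (p q : ℂ) (N : ℕ) (hN : 1 ≤ N) (α γ : ℕ → ℝ → ℂ)
    (hαdiff : ∀ n, Differentiable ℝ (α n))
    (hγdiff : ∀ n, Differentiable ℝ (γ n))
    (hα0 : ∀ t, α 0 t = -1) (hα1 : ∀ t, α 1 t = 0) (hγ0 : ∀ t, γ 0 t = 1)
    (hαN : ∀ t, α (N + 1) t = 0)
    (hne : ∀ n, 1 ≤ n → n ≤ N → ∀ t, γ n t - α (n + 1) t ≠ 0)
    (hαeq : ∀ n, 1 ≤ n → n ≤ N → ∀ t, deriv (α n) t =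
      p * α n t * (α (n - 1) t + γ (n - 1) t - α n t - γ n t) +
        q * α n t *
          (1 / (γ (n - 1) t - α n t) - 1 / (γ n t - α (n + 1) t)))
    (hγeq : ∀ n, 1 ≤ n → n ≤ N → ∀ t, deriv (γ n) t =
      p * (α n t * γ n t - α (n + 1) t * γ (n + 1) t) +
        q * (α (n + 1) t / (γ n t - α (n + 1) t) - α n t / (γ (n - 1) t - α n t)))
    (HN XN YN : ℝ → Matrix (Fin N) (Fin N) ℂ)
    (hHN : ∀ t (i j : Fin N), HN t i j =
      if (i : ℕ) ≤ (j : ℕ) then γ ((j : ℕ) + 1) t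
      else if (i : ℕ) = (j : ℕ) + 1 then α ((i : ℕ) + 1) t
      else 0)
    (hXN : ∀ t (i j : Fin N), XN t i j =
      if i = j then α ((i : ℕ) + 1) t
      else if (i : ℕ) = (j : ℕ) + 1 then -α ((i : ℕ) + 1) t
      else 0)
    (hYN : ∀ t (i j : Fin N), YN t i j =
      if i = j then 1 / (γ ((i : ℕ) + 1) t - α ((i : ℕ) + 2) t)
      else if (j : ℕ) = (i : ℕ) + 1 then -(1 / (γ ((i : ℕ) + 1) t - α ((i : ℕ) + 2) t))
      else 0) :
    ∀ (t : ℝ) (i j : Fin N),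
      deriv (fun s => HN s i j) t =
        (HN t * (p • XN t + q • YN t) - (p • XN t + q • YN t) * HN t) i j := by
  intro t i j
  have hH (s : ℝ) : HN s = hessenberg N (α · s) (γ · s) := by
    ext i j
    rw [hHN, hessenberg_apply]
  have hX : XN t = lowerLax N (α · t) := by
    ext i j
    rw [hXN, lowerLax_apply]
  have hY : YN t = upperLax N fun n => 1 / (γ n t - α (n + 1) t) := by
    ext i j
    rw [hYN, upperLax_apply]
  simp only [hH, hX, hY, ← Ring.lie_def]
  refine (stmt_4_general p q (hα1 t) (hαN t)
    (fun n h₁ hn => mul_one_div_cancel (hne n h₁ hn t)) (fun n h₁ hn => ?_)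
    (fun n h₁ hn => ?_) i j).deriv
  · rw [todaAlpha_one_div p q _ _ h₁, ← hαeq n h₁ hn t]
    exact (hαdiff n t).hasDerivAt
  · rw [todaGamma_one_div p q _ _ h₁, ← hγeq n h₁ hn t]
    exact (hγdiff n t).hasDerivAt
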